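/- Every Euclidean minimum bichromatic spanning tree of a bicolored point set in general position is quasi-plane: no three of its edges pairwise cross each other. -/

import Mathlib

open scoped Classical

noncomputable section

/-- Points in the Euclidean plane. -/
abbrev Pt : Type := EuclideanSpace ℝ (Fin 2)

/-- `S` is in general position: no three (distinct) points of `S` are collinear. -/
def GenPos (S : Finset Pt) : Prop :=
  ∀ p ∈ S, ∀ q ∈ S, ∀ r ∈ S, p ≠ q → p ≠ r → q ≠ r →
    ¬ Collinear ℝ ({p, q, r} : Set Pt)

/-- The closed segments `[a,b]` and `[c,d]` cross: they share a point that is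
interior to both segments. -/
def SegCross (a b c d : Pt) : Prop :=
  ∃ p : Pt, p ∈ openSegment ℝ a b ∧ p ∈ openSegment ℝ c d

/-- Two unordered edges (over vertices lying in the plane) cross. -/
def EdgeCross {S : Finset Pt} (e₁ e₂ : Sym2 ↥S) : Prop :=
  ∃ a b c d : ↥S, e₁ = s(a, b) ∧ e₂ = s(c, d) ∧ SegCross ↑a ↑b ↑c ↑d

/-- A (straight-line drawn) graph is plane if no two of its edges cross. -/
def PlaneGraph {S : Finset Pt} (G : SimpleGraph ↥S) : Prop :=
  ∀ e₁ ∈ G.edgeSet, ∀ e₂ ∈ G.edgeSet, e₁ ≠ e₂ → ¬ EdgeCross e₁ e₂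

/-- Every edge has one red (`true`) and one blue (`false`) endpoint. -/
def Bichromatic {S : Finset Pt} (col : Pt → Bool) (G : SimpleGraph ↥S) : Prop :=
  ∀ u v : ↥S, G.Adj u v → col ↑u ≠ col ↑v

/-- The Euclidean length of an unordered edge. -/
def edgeLen {S : Finset Pt} : Sym2 ↥S → ℝ :=
  Sym2.lift ⟨fun a b => dist (a : Pt) (b : Pt), fun _ _ => dist_comm _ _⟩

/-- The total Euclidean length of the edges of a graph drawn with straight-line edges. -/
def graphLen {S : Finset Pt} (G : SimpleGraph ↥S) : ℝ :=
  ∑ᶠ e ∈ G.edgeSet, edgeLen e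

/-- A bichromatic spanning tree of `S`. -/
def IsBST {S : Finset Pt} (col : Pt → Bool) (G : SimpleGraph ↥S) : Prop :=
  G.IsTree ∧ Bichromatic col G

/-- A minimum bichromatic spanning tree of `S`. -/
def IsMinBST {S : Finset Pt} (col : Pt → Bool) (G : SimpleGraph ↥S) : Prop :=
  IsBST col G ∧ ∀ G' : SimpleGraph ↥S, IsBST col G' → graphLen G ≤ graphLen G'

/-! ### Segments and distances -/

theorem dist_add_dist_of_mem_openSegment {a b p : Pt} (h : p ∈ openSegment ℝ a b) :
    dist a p + dist p b = dist a b :=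
  dist_add_dist_of_mem_segment (openSegment_subset_segment ℝ a b h)

/-- Two points on a segment appear on it in one of the two possible orders. -/
theorem dist_eq_or_of_mem_openSegment {a b p q : Pt} (hp : p ∈ openSegment ℝ a b)
    (hq : q ∈ openSegment ℝ a b) :
    dist a b = dist a p + dist p q + dist q b ∨ dist a b = dist a q + dist p q + dist p b := by
  rw [openSegment_eq_image_lineMap] at hp hq
  obtain ⟨s, ⟨hs0, hs1⟩, rfl⟩ := hp
  obtain ⟨t, ⟨ht0, ht1⟩, rfl⟩ := hq
  simp only [dist_left_lineMap, dist_lineMap_right, dist_lineMap_lineMap, Real.norm_eq_abs,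
    Real.dist_eq, abs_of_pos hs0, abs_of_pos ht0, abs_of_pos (sub_pos.2 hs1),
    abs_of_pos (sub_pos.2 ht1)]
  rcases le_total s t with h | h
  · left; rw [abs_of_nonpos (sub_nonpos.2 h)]; ring
  · right; rw [abs_of_nonneg (sub_nonneg.2 h)]; ring

theorem dist_lt_of_mem_openSegment {a b c p : Pt} (hp : p ∈ openSegment ℝ a b)
    (hc : ¬ Collinear ℝ ({a, b, c} : Set Pt)) : dist a c < dist a p + dist p c := by
  refine lt_of_le_of_ne (dist_triangle _ _ _) fun h => hc ?_
  have hab : a ≠ b := fun h => hc (by simpa [h] using collinear_pair ℝ b c)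
  rw [openSegment_eq_image_lineMap] at hp
  obtain ⟨t, ⟨ht0, -⟩, rfl⟩ := hp
  have hw := (dist_add_dist_eq_iff.1 h.symm).collinear
  have ha : a ≠ AffineMap.lineMap a b t := by
    intro h
    have := congrArg (dist a) h
    rw [dist_self, dist_left_lineMap, Real.norm_eq_abs, abs_of_pos ht0] at this
    exact (mul_pos ht0 (dist_pos.2 hab)).ne this
  have hl : Collinear ℝ (insert b {a, AffineMap.lineMap a b t, c}) := by
    rw [hw.collinear_insert_iff_of_ne (p₂ := a) (p₃ := AffineMap.lineMap a b t)
      (by simp) (by simp) ha]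
    have : Collinear ℝ ({a, b, AffineMap.lineMap a b t} : Set Pt) := by
      rw [show ({a, b, AffineMap.lineMap a b t} : Set Pt) = {AffineMap.lineMap a b t, a, b} by
        ext; simp; tauto]
      exact collinear_insert_of_mem_affineSpan_pair (AffineMap.lineMap_mem_affineSpan_pair _ _ _)
    exact this.subset (by intro x; simp; tauto)
  exact hl.subset (by intro x; simp; tauto)

/-- Swapping endpoints of two crossing segments decreases the total length. -/
theorem dist_add_dist_lt_of_segCross {a b c d : Pt} (h : SegCross a b c d)
    (hn : ¬ Collinear ℝ ({a, b, d} : Set Pt)) :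
    dist a d + dist c b < dist a b + dist c d := by
  obtain ⟨p, hp, hq⟩ := h
  linarith [dist_add_dist_of_mem_openSegment hp, dist_add_dist_of_mem_openSegment hq,
    dist_lt_of_mem_openSegment hp hn, dist_triangle c p b]

/-- The geometric core: three pairwise crossing segments admit a length-decreasing swap. -/
theorem not_pairwise_segCross_of_dist_le {r₁ b₁ r₂ b₂ r₃ b₃ : Pt}
    (h₁₂ : SegCross r₁ b₁ r₂ b₂) (h₂₃ : SegCross r₂ b₂ r₃ b₃) (h₁₃ : SegCross r₁ b₁ r₃ b₃)
    (hn : ¬ Collinear ℝ ({r₁, b₁, b₂} : Set Pt))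
    (h₁ : dist r₁ b₁ ≤ dist r₁ b₂) (h₂ : dist r₂ b₂ ≤ dist r₃ b₁)
    (h₃ : dist r₃ b₃ ≤ dist r₂ b₃) : False := by
  obtain ⟨x, hx₁, hx₂⟩ := h₁₂
  obtain ⟨y, hy₂, hy₃⟩ := h₂₃
  obtain ⟨z, hz₁, hz₃⟩ := h₁₃
  have sx := dist_lt_of_mem_openSegment hx₁ hn
  have sz := dist_lt_of_mem_openSegment hz₁ hn
  have tri := fun p q r : Pt => dist_triangle p q r
  have c₁ := dist_comm x y
  have c₂ := dist_comm x z
  have c₃ := dist_comm y z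
  rcases dist_eq_or_of_mem_openSegment hx₁ hz₁ with e₁ | e₁ <;>
  rcases dist_eq_or_of_mem_openSegment hx₂ hy₂ with e₂ | e₂ <;>
  rcases dist_eq_or_of_mem_openSegment hy₃ hz₃ with e₃ | e₃ <;>
  linarith [tri x y b₂, tri z y b₂, tri z x b₂, tri r₂ x b₃, tri x z b₃, tri r₂ y b₃, tri x y b₃,
    tri r₃ y b₁, tri r₃ z b₁, tri y x b₁, tri z x b₁, tri y z b₁, tri y z b₃,
    tri x y z, tri y z x, tri z x y]

/-! ### Exchanging an edge of a tree -/

namespace SimpleGraph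

variable {V : Type*} {G : SimpleGraph V} {a b c d : V}

theorem Connected.reachable_deleteEdges_or (hG : G.Connected) (a b w : V) :
    (G.deleteEdges {s(a, b)}).Reachable a w ∨ (G.deleteEdges {s(a, b)}).Reachable b w := by
  have h := (reachable_iff_reflTransGen a w).1 (hG.preconnected a w)
  induction h with
  | refl => exact Or.inl (Reachable.refl _)
  | @tail v w _ hvw ih =>
    by_cases he : s(v, w) = s(a, b)
    · rcases Sym2.eq_iff.1 he with ⟨-, rfl⟩ | ⟨-, rfl⟩
      · exact Or.inr (Reachable.refl _)
      · exact Or.inl (Reachable.refl _)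
    · have hadj : (G.deleteEdges {s(a, b)}).Adj v w := by
        rw [deleteEdges_adj]; exact ⟨hvw, by simpa using he⟩
      exact ih.imp (·.trans hadj.reachable) (·.trans hadj.reachable)

/-- After deleting an edge of a connected graph, any other edge lies on one of its two sides. -/
theorem Connected.edge_side (hG : G.Connected) (hcd : G.Adj c d) (hne : s(c, d) ≠ s(a, b)) :
    ((G.deleteEdges {s(a, b)}).Reachable a c ∧ (G.deleteEdges {s(a, b)}).Reachable a d) ∨
      ((G.deleteEdges {s(a, b)}).Reachable b c ∧ (G.deleteEdges {s(a, b)}).Reachable b d) := by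
  have hadj : (G.deleteEdges {s(a, b)}).Adj c d := by
    rw [deleteEdges_adj]; exact ⟨hcd, by simpa using hne⟩
  exact (hG.reachable_deleteEdges_or a b c).imp (fun h => ⟨h, h.trans hadj.reachable⟩)
    (fun h => ⟨h, h.trans hadj.reachable⟩)

theorem IsTree.not_reachable_deleteEdges (hG : G.IsTree) (hab : G.Adj a b) :
    ¬ (G.deleteEdges {s(a, b)}).Reachable a b :=
  isBridge_iff.1 (isAcyclic_iff_forall_adj_isBridge.1 hG.isAcyclic hab)

theorem IsTree.exchange (hG : G.IsTree) (hab : G.Adj a b)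
    (hac : (G.deleteEdges {s(a, b)}).Reachable a c)
    (hbd : (G.deleteEdges {s(a, b)}).Reachable b d) :
    (G.deleteEdges {s(a, b)} ⊔ edge c d).IsTree := by
  have hcd : ¬ (G.deleteEdges {s(a, b)}).Reachable c d := fun h =>
    hG.not_reachable_deleteEdges hab (hac.trans (h.trans hbd.symm))
  have hne : c ≠ d := fun h => hcd (h ▸ Reachable.refl _)
  have hle : G.deleteEdges {s(a, b)} ≤ G.deleteEdges {s(a, b)} ⊔ edge c d := le_sup_left
  have hadj : (G.deleteEdges {s(a, b)} ⊔ edge c d).Adj c d := by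
    simp [sup_adj, edge_adj, hne]
  refine ⟨?_, (hG.isAcyclic.anti (deleteEdges_le _)).sup_edge_of_not_reachable hcd⟩
  have := hG.connected.nonempty
  have hall : ∀ w, (G.deleteEdges {s(a, b)} ⊔ edge c d).Reachable c w := fun w =>
    (hG.connected.reachable_deleteEdges_or a b w).elim
      (fun h => (hac.symm.trans h).mono hle)
      (fun h => hadj.reachable.trans ((hbd.symm.trans h).mono hle))
  exact ⟨fun u v => (hall u).symm.trans (hall v)⟩

end SimpleGraph

/-! ### Minimum bichromatic spanning trees -/

variable {S : Finset Pt} {col : Pt → Bool} {T : SimpleGraph ↥S}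

/-- No edge of a minimum bichromatic spanning tree can be exchanged for a shorter one. -/
theorem IsMinBST.dist_le (hT : IsMinBST col T) {a b c d : ↥S} (hab : T.Adj a b)
    (hac : (T.deleteEdges {s(a, b)}).Reachable a c)
    (hbd : (T.deleteEdges {s(a, b)}).Reachable b d) (hcol : col c ≠ col d) :
    dist (a : Pt) b ≤ dist (c : Pt) d := by
  have hne : c ≠ d := fun h => hcol (by rw [h])
  have hbst : IsBST col (T.deleteEdges {s(a, b)} ⊔ SimpleGraph.edge c d) := by
    refine ⟨hT.1.1.exchange hab hac hbd, fun u v huv => ?_⟩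
    rw [SimpleGraph.sup_adj, SimpleGraph.edge_adj] at huv
    rcases huv with huv | ⟨⟨rfl, rfl⟩ | ⟨rfl, rfl⟩, -⟩
    · exact hT.1.2 u v (SimpleGraph.deleteEdges_le _ huv)
    · exact hcol
    · exact hcol.symm
  have hmin := hT.2 _ hbst
  have hnot : ¬ (T.deleteEdges {s(a, b)}).Adj c d := fun h =>
    hT.1.1.not_reachable_deleteEdges hab (hac.trans (h.reachable.trans hbd.symm))
  have hT' : T.edgeSet = insert s(a, b) (T.deleteEdges {s(a, b)}).edgeSet := by
    rw [SimpleGraph.edgeSet_deleteEdges, Set.insert_sdiff_singleton,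
      Set.insert_eq_of_mem (T.mem_edgeSet.2 hab)]
  have hG' : (T.deleteEdges {s(a, b)} ⊔ SimpleGraph.edge c d).edgeSet =
      insert s(c, d) (T.deleteEdges {s(a, b)}).edgeSet := by
    rw [SimpleGraph.edgeSet_sup, SimpleGraph.edgeSet_edge_of_ne hne, Set.union_singleton]
  rw [graphLen, graphLen, hG', hT', finsum_mem_insert _ _ (Set.toFinite _),
    finsum_mem_insert _ _ (Set.toFinite _)] at hmin
  · simpa [edgeLen] using hmin
  · simpa using hnot
  · simp [SimpleGraph.edgeSet_deleteEdges]

theorem SegCross.swap_left {a b c d : Pt} (h : SegCross a b c d) : SegCross b a c d := by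
  rwa [SegCross, openSegment_symm]

theorem SegCross.symm {a b c d : Pt} (h : SegCross a b c d) : SegCross c d a b :=
  let ⟨p, hp, hq⟩ := h; ⟨p, hq, hp⟩

theorem SegCross.swap_right {a b c d : Pt} (h : SegCross a b c d) : SegCross a b d c :=
  h.symm.swap_left.symm

theorem edgeCross_mk {a b c d : ↥S} (h : EdgeCross s(a, b) s(c, d)) :
    SegCross (a : Pt) b c d := by
  obtain ⟨a', b', c', d', h₁, h₂, h⟩ := h
  rcases Sym2.eq_iff.1 h₁ with ⟨rfl, rfl⟩ | ⟨rfl, rfl⟩ <;>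
  rcases Sym2.eq_iff.1 h₂ with ⟨rfl, rfl⟩ | ⟨rfl, rfl⟩
  exacts [h, h.swap_right, h.swap_left, h.swap_left.swap_right]

theorem Bichromatic.exists_eq_mk (hT : Bichromatic col T) {e : Sym2 ↥S} (he : e ∈ T.edgeSet) :
    ∃ r b : ↥S, e = s(r, b) ∧ T.Adj r b ∧ col r = true ∧ col b = false := by
  induction e with
  | h u v =>
    have hadj := T.mem_edgeSet.1 he
    have := hT u v hadj
    cases hu : col u <;> cases hv : col v
    · simp [hu, hv] at this
    · exact ⟨v, u, Sym2.eq_swap, hadj.symm, hv, hu⟩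
    · exact ⟨u, v, rfl, hadj, hu, hv⟩
    · simp [hu, hv] at this

/-- In general position, an endpoint of an edge crossing `ab` is not on the line `ab`. -/
theorem GenPos.not_collinear_of_segCross (hgp : GenPos S) {a b c d : ↥S} (hab : a ≠ b)
    (hcd : c ≠ d) (had : a ≠ d) (hne : s(a, b) ≠ s(c, d)) (h : SegCross (a : Pt) b c d) :
    ¬ Collinear ℝ ({(a : Pt), (b : Pt), (d : Pt)} : Set Pt) := by
  have inj : ∀ {u v : ↥S}, u ≠ v → (u : Pt) ≠ v := fun huv h => huv (Subtype.ext h)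
  by_cases hbd : b = d
  · subst hbd
    have hac : a ≠ c := fun h => hne (by rw [h])
    obtain ⟨p, hp, hq⟩ := h
    have hnc := hgp a a.2 b b.2 c c.2 (inj hab) (inj hac) (inj hcd.symm)
    have hnb : ¬ Collinear ℝ ({(b : Pt), (a : Pt), (c : Pt)} : Set Pt) := fun h =>
      hnc (h.subset (by intro x; simp; tauto))
    rw [openSegment_symm] at hp hq
    exact ((dist_lt_of_mem_openSegment hp hnb).ne' (dist_add_dist_of_mem_openSegment hq)).elim
  · exact hgp a a.2 b b.2 d d.2 (inj hab) (inj had) (inj hbd)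

/-- The condition that `r₂b₂` hangs on the `b₁`-side of `r₁b₁`, and `r₁b₁` on the `r₂`-side
of `r₂b₂`. -/
def Precedes (T : SimpleGraph ↥S) (r₁ b₁ r₂ b₂ : ↥S) : Prop :=
  (T.deleteEdges {s(r₁, b₁)}).Reachable b₁ b₂ ∧ (T.deleteEdges {s(r₂, b₂)}).Reachable r₂ r₁ ∧
  (T.deleteEdges {s(r₁, b₁)}).Reachable b₁ r₂ ∧ (T.deleteEdges {s(r₂, b₂)}).Reachable r₂ b₁

theorem IsMinBST.precedes_or (hT : IsMinBST col T) (hgp : GenPos S) {r₁ b₁ r₂ b₂ : ↥S}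
    (h₁ : T.Adj r₁ b₁) (h₂ : T.Adj r₂ b₂) (hr₁ : col r₁ = true) (hb₁ : col b₁ = false)
    (hr₂ : col r₂ = true) (hb₂ : col b₂ = false) (hne : s(r₁, b₁) ≠ s(r₂, b₂))
    (hc : SegCross (r₁ : Pt) b₁ r₂ b₂) : Precedes T r₁ b₁ r₂ b₂ ∨ Precedes T r₂ b₂ r₁ b₁ := by
  have hlt := dist_add_dist_lt_of_segCross hc (hgp.not_collinear_of_segCross h₁.ne h₂.ne
    (fun h => by rw [h, hb₂] at hr₁; cases hr₁) hne hc)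
  rcases hT.1.1.connected.edge_side h₂ hne.symm with ⟨p, q⟩ | ⟨p, q⟩ <;>
  rcases hT.1.1.connected.edge_side h₁ hne with ⟨p', q'⟩ | ⟨p', q'⟩
  · have e₁ := hT.dist_le h₁ p (.refl _) (by simp [hr₂, hb₁])
    have e₂ := hT.dist_le h₂ p' (.refl _) (by simp [hr₁, hb₂])
    linarith
  · exact Or.inr ⟨q', p, p', q⟩
  · exact Or.inl ⟨q, p', p, q'⟩
  · have e₁ := hT.dist_le h₁ (.refl _) q (by simp [hr₁, hb₂])
    have e₂ := hT.dist_le h₂ (.refl _) q' (by simp [hr₂, hb₁])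
    linarith

theorem IsMinBST.not_precedes_chain (hT : IsMinBST col T) (hgp : GenPos S)
    {r₁ b₁ r₂ b₂ r₃ b₃ : ↥S}
    (h₁ : T.Adj r₁ b₁) (h₂ : T.Adj r₂ b₂) (h₃ : T.Adj r₃ b₃)
    (hr₁ : col r₁ = true) (hb₁ : col b₁ = false) (hr₂ : col r₂ = true) (hb₂ : col b₂ = false)
    (hr₃ : col r₃ = true) (hb₃ : col b₃ = false) (hne : s(r₁, b₁) ≠ s(r₂, b₂))
    (c₁₂ : SegCross (r₁ : Pt) b₁ r₂ b₂) (c₂₃ : SegCross (r₂ : Pt) b₂ r₃ b₃)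
    (c₁₃ : SegCross (r₁ : Pt) b₁ r₃ b₃)
    (p₁₂ : Precedes T r₁ b₁ r₂ b₂) (p₂₃ : Precedes T r₂ b₂ r₃ b₃) : False := by
  refine not_pairwise_segCross_of_dist_le c₁₂ c₂₃ c₁₃
    (hgp.not_collinear_of_segCross h₁.ne h₂.ne (fun h => by rw [h, hb₂] at hr₁; cases hr₁) hne c₁₂)
    (hT.dist_le h₁ (.refl _) p₁₂.1 (by simp [hr₁, hb₂])) ?_
    (hT.dist_le h₃ p₂₃.2.1 (.refl _) (by simp [hr₂, hb₃]))
  rw [dist_comm (r₃ : Pt)]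
  exact hT.dist_le h₂ p₁₂.2.2.2 p₂₃.2.2.1 (by simp [hr₃, hb₁])

/-- Every Euclidean minimum bichromatic spanning tree of a bicolored
point set in general position is quasi-plane: no three of its edges pairwise cross. -/
theorem minBST_quasi_plane
    (S : Finset Pt) (col : Pt → Bool) (hgp : GenPos S)
    (T : SimpleGraph ↥S) (hT : IsMinBST col T)
    (e₁ e₂ e₃ : Sym2 ↥S)
    (h₁ : e₁ ∈ T.edgeSet) (h₂ : e₂ ∈ T.edgeSet) (h₃ : e₃ ∈ T.edgeSet)
    (h₁₂ : e₁ ≠ e₂) (h₁₃ : e₁ ≠ e₃) (h₂₃ : e₂ ≠ e₃) :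
    ¬ (EdgeCross e₁ e₂ ∧ EdgeCross e₁ e₃ ∧ EdgeCross e₂ e₃) := by
  rintro ⟨c₁₂, c₁₃, c₂₃⟩
  obtain ⟨r₁, b₁, rfl, a₁, hr₁, hb₁⟩ := hT.1.2.exists_eq_mk h₁
  obtain ⟨r₂, b₂, rfl, a₂, hr₂, hb₂⟩ := hT.1.2.exists_eq_mk h₂
  obtain ⟨r₃, b₃, rfl, a₃, hr₃, hb₃⟩ := hT.1.2.exists_eq_mk h₃
  replace c₁₂ := edgeCross_mk c₁₂
  replace c₁₃ := edgeCross_mk c₁₃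
  replace c₂₃ := edgeCross_mk c₂₃
  have chain := @IsMinBST.not_precedes_chain S col T hT hgp
  rcases hT.precedes_or hgp a₁ a₂ hr₁ hb₁ hr₂ hb₂ h₁₂ c₁₂ with p | p <;>
  rcases hT.precedes_or hgp a₂ a₃ hr₂ hb₂ hr₃ hb₃ h₂₃ c₂₃ with q | q
  · exact chain a₁ a₂ a₃ hr₁ hb₁ hr₂ hb₂ hr₃ hb₃ h₁₂ c₁₂ c₂₃ c₁₃ p q
  · rcases hT.precedes_or hgp a₁ a₃ hr₁ hb₁ hr₃ hb₃ h₁₃ c₁₃ with r | r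
    · exact chain a₁ a₃ a₂ hr₁ hb₁ hr₃ hb₃ hr₂ hb₂ h₁₃ c₁₃ c₂₃.symm c₁₂ r q
    · exact chain a₃ a₁ a₂ hr₃ hb₃ hr₁ hb₁ hr₂ hb₂ h₁₃.symm c₁₃.symm c₁₂ c₂₃.symm r p
  · rcases hT.precedes_or hgp a₁ a₃ hr₁ hb₁ hr₃ hb₃ h₁₃ c₁₃ with r | r
    · exact chain a₂ a₁ a₃ hr₂ hb₂ hr₁ hb₁ hr₃ hb₃ h₁₂.symm c₁₂.symm c₁₃ c₂₃ p r
    · exact chain a₂ a₃ a₁ hr₂ hb₂ hr₃ hb₃ hr₁ hb₁ h₂₃ c₂₃ c₁₃.symm c₁₂.symm q r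
  · exact chain a₃ a₂ a₁ hr₃ hb₃ hr₂ hb₂ hr₁ hb₁ h₂₃.symm c₂₃.symm c₁₂.symm c₁₃.symm q p
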